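/- arXiv:2310.01756 — 11 statements merged into one kernel-verified Lean document; each statement's English description precedes it below -/
import Mathlib

section
/- Let n ≥ 1, η > 0, and L, ℓ̂ ∈ ℝⁿ. Define F(p) = ⟨L, p⟩ + (1/η)·Ψ(p) for p with all positive entries, where Ψ is the log-barrier regularizer. Let p be a minimizer of F over the interior simplex {p ∈ Δ_n : p_k > 0 for all k}, and let q ∈ Δ_n have all positive entries. Then there exists α ∈ [0,1] such that, setting ξ = α·p + (1−α)·q, one has ⟨ℓ̂, p − q⟩ + F(p) − F(q) ≤ (η/2) · Σ_{k=1}^n ℓ̂_k² ξ_k². -/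
/-!
Restrict `F` to the segment from `p` to `q`, parametrised by `t ↦ p + t (q - p)`. The restriction is
defined and smooth for `t` slightly negative as well, so minimality of `p` makes its derivative
vanish at `0`, and Taylor's formula with Lagrange remainder (`exists_taylor_two`) gives a point
`ξ` of the segment with `F q - F p = (1 / (2η)) ∑ k, (q k - p k)² / ξ k²`, the Hessian of the log
barrier being `diag (1 / ξ k²)`. The linear term is bounded coordinatewise by Young's inequality
`ℓ d ≤ (η/2) ℓ² ξ² + (1 / (2η)) d² / ξ²`, and the two Hessian terms cancel.
-/

open Finset

/-- Taylor's formula at a critical point, with second-order Lagrange remainder. The mean value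
theorem of Cauchy is applied to `g` against `t²`, and then the ordinary one to `g'`. -/
lemma exists_taylor_two (g g' g'' : ℝ → ℝ)
    (h1 : ∀ t ∈ Set.Icc (0 : ℝ) 1, HasDerivAt g (g' t) t)
    (h2 : ∀ t ∈ Set.Icc (0 : ℝ) 1, HasDerivAt g' (g'' t) t) (h0 : g' 0 = 0) :
    ∃ s ∈ Set.Icc (0 : ℝ) 1, g 1 - g 0 = g'' s / 2 := by
  obtain ⟨c, hc, hc'⟩ := exists_ratio_hasDerivAt_eq_ratio_slope g g' (zero_lt_one (α := ℝ))
    (fun t ht => (h1 t ht).continuousAt.continuousWithinAt)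
    (fun t ht => h1 t (Set.Ioo_subset_Icc_self ht))
    (fun t => t ^ 2) (fun t => 2 * t) (by fun_prop)
    (fun t _ => by simpa using hasDerivAt_pow 2 t)
  have hsub : ∀ t ∈ Set.Icc (0 : ℝ) c, t ∈ Set.Icc (0 : ℝ) 1 :=
    fun t ht => ⟨ht.1, ht.2.trans hc.2.le⟩
  obtain ⟨s, hs, hs'⟩ := exists_hasDerivAt_eq_slope g' g'' hc.1
    (fun t ht => (h2 t (hsub t ht)).continuousAt.continuousWithinAt)
    (fun t ht => h2 t (hsub t (Set.Ioo_subset_Icc_self ht)))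
  refine ⟨s, hsub s (Set.Ioo_subset_Icc_self hs), ?_⟩
  have hc0 : c ≠ 0 := hc.1.ne'
  rw [h0, sub_zero, sub_zero, eq_div_iff hc0] at hs'
  apply mul_right_cancel₀ hc0
  linear_combination -hc' / 2 - hs' / 2

lemma young_local (η l d x : ℝ) (hη : 0 < η) (hx : 0 < x) :
    l * d ≤ (η / 2) * (l ^ 2 * x ^ 2) + (1 / η) * (d ^ 2 / x ^ 2) / 2 := by
  have h : (η / 2) * (l ^ 2 * x ^ 2) + (1 / η) * (d ^ 2 / x ^ 2) / 2 - l * d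
      = (η * l * x - d / x) ^ 2 / (2 * η) := by
    field_simp
    ring
  have : 0 ≤ (η * l * x - d / x) ^ 2 / (2 * η) := by positivity
  linarith

/-- Lemma 4 of the paper: the per-round FTRL error with the log-barrier
regularizer is bounded by half the learning rate times the squared local norm
of the loss, evaluated at some point `ξ` on the segment between the minimizer
`p` and the comparator `q`. -/
theorem ftrl_local_norm_bound (n : ℕ) (hn : 1 ≤ n) (η : ℝ) (hη : 0 < η)
    (L lhat : Fin n → ℝ)
    (F : (Fin n → ℝ) → ℝ)
    (hF : ∀ r : Fin n → ℝ,
      F r = (∑ k, L k * r k)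
        + (1 / η) * (∑ k, (Real.log (1 / r k) - Real.log (1 / (n : ℝ)))))
    (p : Fin n → ℝ) (hp : (∀ k, 0 < p k) ∧ ∑ k, p k = 1)
    (hpmin : ∀ r : Fin n → ℝ, (∀ k, 0 < r k) → ∑ k, r k = 1 → F p ≤ F r)
    (q : Fin n → ℝ) (hq : (∀ k, 0 < q k) ∧ ∑ k, q k = 1) :
    ∃ α ∈ Set.Icc (0 : ℝ) 1,
      (∑ k, lhat k * (p k - q k)) + F p - F q
        ≤ (η / 2) * ∑ k, (lhat k) ^ 2 * (α * p k + (1 - α) * q k) ^ 2 := by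
  obtain ⟨hp0, hp1⟩ := hp
  obtain ⟨hq0, hq1⟩ := hq
  set x : ℝ → Fin n → ℝ := fun t k => p k + t * (q k - p k) with hx
  have hx0 : x 0 = p := by ext k; simp [hx]
  have hx1 : x 1 = q := by ext k; simp [hx]
  have hxs : ∀ t, ∑ k, x t k = 1 := fun t => by
    simp [hx, sum_add_distrib, ← mul_sum, hp1, hq1]
  have hxd : ∀ t k, HasDerivAt (fun t => x t k) (q k - p k) t := fun t k => by
    simpa [hx] using ((hasDerivAt_id t).mul_const (q k - p k)).const_add (p k)
  have hxpos : ∀ t ∈ Set.Icc (0 : ℝ) 1, ∀ k, 0 < x t k := fun t ht k => by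
    have h := (convex_Ioi (0 : ℝ)) (hp0 k) (hq0 k) (sub_nonneg.2 ht.2) ht.1 (by ring)
    simp only [smul_eq_mul, Set.mem_Ioi] at h
    simp only [hx]
    linarith
  have hd1 : ∀ t ∈ Set.Icc (0 : ℝ) 1, HasDerivAt (fun t => F (x t))
      (∑ k, L k * (q k - p k) + (1 / η) * ∑ k, -((q k - p k) / x t k)) t := fun t ht => by
    simp only [hF, one_div (x _ _), Real.log_inv]
    exact (HasDerivAt.fun_sum fun k _ => (hxd t k).const_mul (L k)).add
      ((HasDerivAt.fun_sum fun k _ =>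
        (((hxd t k).log (hxpos t ht k).ne').neg.sub_const _)).const_mul _)
  have hd2 : ∀ t ∈ Set.Icc (0 : ℝ) 1, HasDerivAt
      (fun t => ∑ k, L k * (q k - p k) + (1 / η) * ∑ k, -((q k - p k) / x t k))
      ((1 / η) * ∑ k, (q k - p k) ^ 2 / x t k ^ 2) t := fun t ht => by
    refine ((HasDerivAt.fun_sum fun k _ => ?_).const_mul _).const_add _
    have h := ((hasDerivAt_const t (q k - p k)).div (hxd t k) (hxpos t ht k).ne').neg
    exact h.congr_deriv (by ring)
  -- The segment stays in the open simplex for small negative `t`, so `0` is a two-sided minimum.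
  have hmin : IsLocalMin (fun t => F (x t)) 0 := by
    have hev : ∀ᶠ t in nhds (0 : ℝ), ∀ k, 0 < x t k := Filter.eventually_all.2 fun k =>
      (hxd 0 k).continuousAt.eventually (lt_mem_nhds (by simpa [hx0] using hp0 k))
    filter_upwards [hev] with t ht
    simpa only [hx0] using hpmin (x t) ht (hxs t)
  obtain ⟨s, hs, hs'⟩ := exists_taylor_two _ _ _ hd1 hd2
    (hmin.hasDerivAt_eq_zero (hd1 0 (by simp)))
  simp only [hx0, hx1] at hs'
  refine ⟨1 - s, ⟨by linarith [hs.2], by linarith [hs.1]⟩, ?_⟩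
  have hξ : ∀ k, (1 - s) * p k + (1 - (1 - s)) * q k = x s k := fun k => by
    simp only [hx]
    ring
  simp only [hξ]
  have hY := sum_le_sum fun k (_ : k ∈ univ) =>
    young_local η (lhat k) (p k - q k) (x s k) hη (hxpos s hs k)
  rw [sum_add_distrib, ← mul_sum, ← sum_div, ← mul_sum] at hY
  simp only [sub_sq_comm (p _) (q _)] at hY
  linarith
end

section
/- Let n ≥ 1, η > 0, L ∈ ℝⁿ, k ∈ {1,…,n}, and ℓ ≥ 0. Define F(p) = ⟨L, p⟩ + (1/η)·Ψ(p) where Ψ is the log-barrier regularizer, let p be a minimizer of F over the interior simplex {p ∈ Δ_n : p_j > 0 for all j}, and let ℓ̂ = (ℓ/p_k)·e_k be the importance-weighted loss vector (so ℓ̂_k = ℓ/p_k and ℓ̂_j = 0 for j ≠ k). Then for every q ∈ Δ_n with all positive entries, ⟨ℓ̂, p − q⟩ + F(p) − F(q) ≤ min( (η/2)·ℓ², ℓ ). -/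
/-!
Minimality of `p` makes the derivative of `F` vanish at `p` along every direction tangent to the
simplex, so `F q - F p` equals the Bregman divergence `(1/η) ∑ j, (x j - 1 - log (x j))` with
`x j = q j / p j`. Every summand is nonnegative, so only the `k`-th one need be kept. Writing
`u = 1 - x k`, the loss term is `ℓ * u`. If `u ≤ 0` it is nonpositive; otherwise
`-u - log (1 - u) ≥ u ^ 2 / 2` and `ℓ * u - u ^ 2 / (2 * η) ≤ η * ℓ ^ 2 / 2` by completing the square.
The bound by `ℓ` follows from `F p ≤ F q` and `u ≤ 1`.
-/

open Finset

/-- The Taylor series of `-log (1 - u)` has nonnegative terms; keep the first two. -/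
lemma half_sq_le_neg_sub_log {u : ℝ} (h0 : 0 ≤ u) (h1 : u < 1) :
    u ^ 2 / 2 ≤ -u - Real.log (1 - u) := by
  have hs := Real.hasSum_pow_div_log_of_abs_lt_one (x := u) (by rw [abs_lt]; constructor <;> linarith)
  have := sum_le_hasSum (range 2) (fun i _ => by positivity) hs
  norm_num [Finset.sum_range_succ] at this
  linarith

/-- First-order optimality of an interior minimizer of the log-barrier objective: the directional
derivative vanishes toward every other interior point of the simplex. -/
lemma log_barrier_first_order {n : ℕ} (η c : ℝ) (L p q : Fin n → ℝ)
    (hp : ∀ j, 0 < p j) (hp1 : ∑ j, p j = 1) (hq1 : ∑ j, q j = 1)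
    (hmin : ∀ r : Fin n → ℝ, (∀ j, 0 < r j) → ∑ j, r j = 1 →
      (∑ j, L j * p j) + (1 / η) * (∑ j, (Real.log (1 / p j) - c)) ≤
      (∑ j, L j * r j) + (1 / η) * (∑ j, (Real.log (1 / r j) - c))) :
    (∑ j, L j * (q j - p j)) = (1 / η) * ∑ j, (q j - p j) / p j := by
  let r : ℝ → Fin n → ℝ := fun t j => p j + t * (q j - p j)
  let g : ℝ → ℝ := fun t => (∑ j, L j * r t j) + (1 / η) * (∑ j, (Real.log (1 / r t j) - c))
  have hr0 : r 0 = p := by funext j; simp [r]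
  have hr : ∀ j, HasDerivAt (fun t => r t j) (q j - p j) 0 := fun j => by
    simpa [r] using ((hasDerivAt_id (0 : ℝ)).mul_const (q j - p j)).const_add (p j)
  have hg : HasDerivAt g ((∑ j, L j * (q j - p j))
      + (1 / η) * ∑ j, -((q j - p j) / p j)) 0 := by
    refine HasDerivAt.add (HasDerivAt.fun_sum fun j _ => (hr j).const_mul (L j))
      (HasDerivAt.const_mul _ (HasDerivAt.fun_sum fun j _ => ?_))
    have hne : r 0 j ≠ 0 := by rw [hr0]; exact (hp j).ne'
    have h := ((hr j).log hne).neg.sub_const c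
    rw [hr0] at h
    refine h.congr_of_eventuallyEq (Filter.Eventually.of_forall fun t => ?_)
    simp
  -- Since `p` is interior, the segment stays in the open simplex on both sides of `t = 0`.
  have hloc : IsLocalMin g 0 := by
    have hpos : ∀ᶠ t in nhds (0 : ℝ), ∀ j, 0 < r t j := by
      rw [Filter.eventually_all]
      intro j
      exact (hr j).continuousAt.eventually_const_lt (by simpa [hr0] using hp j)
    filter_upwards [hpos] with t ht
    have hsum : ∑ j, r t j = 1 := by
      simp [r, Finset.sum_add_distrib, ← Finset.mul_sum, hp1, hq1]
    have := hmin (r t) ht hsum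
    simpa only [g, hr0] using this
  have h0 := hloc.hasDerivAt_eq_zero hg
  rw [Finset.sum_neg_distrib] at h0
  linarith

/-- Nonnegative-loss case of Lemma 4 combined with inequality (4) of the paper:
for importance-weighted nonnegative losses, the per-round log-barrier FTRL
error is bounded by `min((η/2)·ℓ², ℓ)`. -/
theorem ftrl_nonneg_loss_bound (n : ℕ) (hn : 1 ≤ n) (η : ℝ) (hη : 0 < η)
    (L : Fin n → ℝ) (k : Fin n) (ℓ : ℝ) (hℓ : 0 ≤ ℓ)
    (F : (Fin n → ℝ) → ℝ)
    (hF : ∀ r : Fin n → ℝ,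
      F r = (∑ j, L j * r j)
        + (1 / η) * (∑ j, (Real.log (1 / r j) - Real.log (1 / (n : ℝ)))))
    (p : Fin n → ℝ) (hp : (∀ j, 0 < p j) ∧ ∑ j, p j = 1)
    (hpmin : ∀ r : Fin n → ℝ, (∀ j, 0 < r j) → ∑ j, r j = 1 → F p ≤ F r)
    (lhat : Fin n → ℝ)
    (hlhat : ∀ j, lhat j = if j = k then ℓ / p k else 0) :
    ∀ q : Fin n → ℝ, (∀ j, 0 < q j) → ∑ j, q j = 1 →
      (∑ j, lhat j * (p j - q j)) + F p - F q ≤ min ((η / 2) * ℓ ^ 2) ℓ := by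
  intro q hq hq1
  obtain ⟨hp0, hp1⟩ := hp
  have hFpq := hpmin q hq hq1
  have hpk := hp0 k
  have hqk := hq k
  have hlin : ∑ j, lhat j * (p j - q j) = ℓ * (1 - q k / p k) := by
    simp only [hlhat, ite_mul, zero_mul, Finset.sum_ite_eq', Finset.mem_univ, if_true]
    field_simp
  have hxk : 0 < q k / p k := div_pos hqk hpk
  rw [hlin]
  refine le_min ?_ (by nlinarith [mul_nonneg hℓ hxk.le])
  rcases le_or_gt 1 (q k / p k) with hx | hx
  · have h1 : ℓ * (1 - q k / p k) ≤ 0 := mul_nonpos_of_nonneg_of_nonpos hℓ (by linarith)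
    have h2 : 0 ≤ η / 2 * ℓ ^ 2 := by positivity
    linarith
  have hfo := log_barrier_first_order η (Real.log (1 / (n : ℝ))) L p q hp0 hp1 hq1
    (fun r h0 h1 => by simpa only [hF] using hpmin r h0 h1)
  have hbreg : F q - F p = (1 / η) * ∑ j, (q j / p j - 1 - Real.log (q j / p j)) := by
    have e1 : F q - F p = (∑ j, L j * (q j - p j))
        + (1 / η) * ∑ j, (Real.log (p j) - Real.log (q j)) := by
      simp only [hF, one_div, Real.log_inv, mul_sub, Finset.sum_sub_distrib, Finset.sum_neg_distrib]
      ring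
    rw [e1, hfo, ← mul_add, ← Finset.sum_add_distrib]
    congr 1
    refine Finset.sum_congr rfl fun j _ => ?_
    rw [Real.log_div (hq j).ne' (hp0 j).ne', sub_div, div_self (hp0 j).ne']
    ring
  have hterm : q k / p k - 1 - Real.log (q k / p k)
      ≤ ∑ j, (q j / p j - 1 - Real.log (q j / p j)) :=
    Finset.single_le_sum (f := fun j => q j / p j - 1 - Real.log (q j / p j))
      (fun j _ => sub_nonneg.2 (Real.log_le_sub_one_of_pos (div_pos (hq j) (hp0 j))))
      (Finset.mem_univ k)
  have hhalf := half_sq_le_neg_sub_log (u := 1 - q k / p k) (by linarith) (by linarith)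
  rw [sub_sub_cancel] at hhalf
  set u := 1 - q k / p k with hu
  have hB : (1 / η) * (u ^ 2 / 2) ≤ F q - F p := by
    rw [hbreg]
    exact mul_le_mul_of_nonneg_left (by linarith) (by positivity)
  have hsq : ℓ * u - (1 / η) * (u ^ 2 / 2) = η / 2 * ℓ ^ 2 - (η * ℓ - u) ^ 2 / (2 * η) := by
    field_simp
    ring
  have hnn : 0 ≤ (η * ℓ - u) ^ 2 / (2 * η) := by positivity
  linarith
end

section
/- Let n ≥ 1, T ≥ 1 with n·T ≥ 3, let ℓ_1, …, ℓ_T ∈ ℝⁿ have all nonnegative entries, and let k_1, …, k_T ∈ {1,…,n} be a sequence of actions. For each t, define the inverse learning rate λ_t = (1/2)·√( (Σ_{s=1}^{t−1} ℓ_{s,k_s}²) / n ) (so λ_1 = 0), let p_t be a minimizer over {p ∈ Δ_n : p_k > 0 for all k} of Σ_{s=1}^{t−1} ⟨ℓ̂_s, p⟩ + λ_t·Ψ(p) where Ψ is the log-barrier regularizer, and define the importance-weighted estimator ℓ̂_t ∈ ℝⁿ by ℓ̂_{t,k} = 𝟙(k = k_t)·ℓ_{t,k}/p_{t,k}. Then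 for every p† ∈ Δ_n with p†_k ≥ 1/(nT) for all k, Σ_{t=1}^T ⟨ℓ̂_t, p_t − p†⟩ ≤ 4·√( n·Σ_{t=1}^T ℓ_{t,k_t}² )·log(nT) + 3.5·√n·max_{t ∈ [T]} ℓ_{t,k_t}. -/
/-!
Write `L t = ℓ t (k t)`, `V m = ∑ t < m, L t ^ 2`, `λ m = √(V m / n) / 2`, and let `F m` be the
regularized objective minimized by `p m`. The importance weighting gives `⟨lhat t, p t⟩ = L t`.

First-order optimality on the simplex turns `F m q - F m (p m)` into `λ m` times the Bregman
divergence `∑ j, (x j - 1 - log (x j))` of the log-barrier, where `x j = q j / p m j`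
(`barrier_growth`). All its summands are nonnegative, so only the played coordinate is kept, and
`⟨lhat m, p m - q⟩ - (F m q - F m (p m))` is at most
`sup_x (L (1 - x) - λ (x - 1 - log x)) ≤ min (L, L ^ 2 / (2 λ))`. Since
`V (m + 1) = V m + L ^ 2`, this is at most `(5/2) √n (√V (m + 1) - √V m)` (`stability_step`),
which telescopes. As `λ` is nondecreasing and the barrier is nonnegative on the simplex, induction
on `m` yields `∑ t < m, L t ≤ F m q + (5/2) √n √(V m)` for every positive `q` in the simplex. At
`m = T`, `q = pdag` the barrier is at most `2 n log (n T)`, so the regret is at most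
`(1 + 5/2) √(n V T) log (n T)`; the term with the maximum is only needed to be nonnegative.
-/

open Finset

/-- The left side is largest at `x = λ / (λ + L)`, where it equals `L - λ log (1 + L / λ)`;
the bound then follows from `log (1 + y) ≥ 2 y / (y + 2)`. -/
lemma coord_sup_le {L lam x : ℝ} (hL : 0 ≤ L) (hlam : 0 < lam) (hx : 0 < x) :
    L * (1 - x) - lam * (x - 1 - Real.log x) ≤ L ^ 2 / (2 * lam) := by
  have hy : 0 ≤ L / lam := by positivity
  have h1 : Real.log (x * (1 + L / lam)) ≤ x * (1 + L / lam) - 1 :=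
    Real.log_le_sub_one_of_pos (by positivity)
  rw [Real.log_mul hx.ne' (by positivity)] at h1
  have h2 := Real.le_log_one_add_of_nonneg hy
  have h3 : L / lam - (L / lam) ^ 2 / 2 ≤ 2 * (L / lam) / (L / lam + 2) := by
    rw [le_div_iff₀ (by positivity)]
    nlinarith [pow_nonneg hy 3]
  obtain ⟨y, rfl⟩ : ∃ y, L = lam * y := ⟨L / lam, by field_simp⟩
  have e : lam * y / lam = y := by field_simp
  rw [e] at hy h1 h2 h3
  have e2 : (lam * y) ^ 2 / (2 * lam) = lam * (y ^ 2 / 2) := by field_simp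
  rw [e2]
  have : y * (1 - x) - (x - 1 - Real.log x) ≤ y ^ 2 / 2 := by linarith
  nlinarith [mul_le_mul_of_nonneg_left this hlam.le]

/-- Stability of one round, with `a = √V`, `b = √(V + L ^ 2)`, `s = √n`, `λ = a / (2 s)`:
the bound `L` is used when `a ≤ L`, the bound `L ^ 2 / (2 λ)` when `L < a`. -/
lemma stability_step {L a b s x : ℝ} (hL : 0 ≤ L) (ha : 0 ≤ a) (hb : 0 ≤ b)
    (hs : 1 ≤ s) (hab : b ^ 2 = a ^ 2 + L ^ 2) (hx : 0 < x) :
    L * (1 - x) - (1 / 2 * (a / s)) * (x - 1 - Real.log x) ≤ 5 / 2 * s * (b - a) := by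
  have hba : a ≤ b := by nlinarith
  have hg : 0 ≤ x - 1 - Real.log x := by linarith [Real.log_le_sub_one_of_pos hx]
  rcases le_or_gt a L with h | h
  · have h1 : L ≤ 5 / 2 * (b - a) := by
      rcases hL.eq_or_lt with h0 | h0
      · rw [← h0]; linarith
      · have hb' : b ≤ 3 / 2 * L := by nlinarith
        have : L * L ≤ L * (5 / 2 * (b - a)) := by nlinarith
        exact le_of_mul_le_mul_left this h0
    have h2 : 0 ≤ (1 / 2 * (a / s)) * (x - 1 - Real.log x) := by positivity
    nlinarith [mul_nonneg hL hx.le]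
  · have ha' : 0 < a := lt_of_le_of_lt hL h
    refine (coord_sup_le hL (by positivity) hx).trans ?_
    have hb' : b ≤ 3 / 2 * a := by nlinarith
    have e : L ^ 2 / (2 * (1 / 2 * (a / s))) = s * (L ^ 2 / a) := by field_simp
    have h3 : L ^ 2 / a ≤ 5 / 2 * (b - a) := by
      rw [div_le_iff₀ ha']; nlinarith
    rw [e]
    nlinarith

/-- The log-barrier `∑ j, log (n / q j)`; at the uniform distribution its value is `2 n log n`. -/
noncomputable def logBarrier (n : ℕ) (q : Fin n → ℝ) : ℝ :=
  ∑ j, (Real.log (1 / q j) - Real.log (1 / (n : ℝ)))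

lemma logBarrier_nonneg {n : ℕ} (hn : 1 ≤ n) {q : Fin n → ℝ} (hq : ∀ j, 0 < q j)
    (hq1 : ∑ j, q j = 1) : 0 ≤ logBarrier n q := by
  refine Finset.sum_nonneg fun j _ => ?_
  have h1 : q j ≤ 1 := hq1 ▸ Finset.single_le_sum (fun i _ => (hq i).le) (Finset.mem_univ j)
  have h2 := Real.log_nonpos (hq j).le h1
  have h3 : 0 ≤ Real.log (n : ℝ) := Real.log_nonneg (by exact_mod_cast hn)
  simp only [one_div, Real.log_inv]
  linarith

lemma logBarrier_sub {n : ℕ} {p q : Fin n → ℝ} (hp : ∀ j, 0 < p j) (hq : ∀ j, 0 < q j) :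
    logBarrier n q - logBarrier n p = -∑ j, Real.log (q j / p j) := by
  unfold logBarrier
  rw [← Finset.sum_sub_distrib, ← Finset.sum_neg_distrib]
  refine Finset.sum_congr rfl fun j _ => ?_
  rw [Real.log_div (hq j).ne' (hp j).ne']
  simp only [one_div, Real.log_inv]
  ring

/-- Growth of the objective away from its minimizer: the first-order condition along the segment
towards `q` leaves the Bregman divergence of the barrier, of which one coordinate is kept. -/
lemma barrier_growth {n : ℕ} (A p q : Fin n → ℝ) (lam : ℝ) (hlam : 0 ≤ lam)
    (hp : ∀ j, 0 < p j) (hp1 : ∑ j, p j = 1) (hq : ∀ j, 0 < q j) (hq1 : ∑ j, q j = 1)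
    (hmin : ∀ r : Fin n → ℝ, (∀ j, 0 < r j) → ∑ j, r j = 1 →
      ∑ j, A j * p j + lam * logBarrier n p ≤ ∑ j, A j * r j + lam * logBarrier n r)
    (i : Fin n) :
    ∑ j, A j * p j + lam * logBarrier n p + lam * (q i / p i - 1 - Real.log (q i / p i))
      ≤ ∑ j, A j * q j + lam * logBarrier n q := by
  set u : Fin n → ℝ := fun j => q j / p j - 1 with hu
  have hpu : ∀ j, p j * u j = q j - p j := fun j => by
    have := (hp j).ne'
    simp only [hu]; field_simp
  set D := ∑ j, A j * (q j - p j) with hD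
  have hpos : ∀ᶠ e : ℝ in nhds 0, ∀ j, 0 < 1 + e * u j := by
    rw [Filter.eventually_all]
    intro j
    have hc : ContinuousAt (fun e : ℝ => 1 + e * u j) 0 := by fun_prop
    exact hc.eventually (lt_mem_nhds (by simp))
  -- The perturbation `p j * (1 + e * u j)` stays in the open simplex for small `e` of either sign,
  -- so `0` is a two-sided local maximum and the derivative vanishes.
  have hmax : IsLocalMax (fun e : ℝ => lam * ∑ j, Real.log (1 + e * u j) - e * D) 0 := by
    filter_upwards [hpos] with e he
    have hr : ∀ j, 0 < p j * (1 + e * u j) := fun j => mul_pos (hp j) (he j)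
    have hr' : ∀ j, p j * (1 + e * u j) = p j + e * (q j - p j) := fun j => by
      rw [← hpu]; ring
    have h1 : ∑ j, p j * (1 + e * u j) = 1 := by
      simp_rw [hr']
      rw [Finset.sum_add_distrib, ← Finset.mul_sum, Finset.sum_sub_distrib, hp1, hq1]; ring
    have h2 := hmin _ hr h1
    have h3 := logBarrier_sub hp hr
    have h4 : ∀ j, p j * (1 + e * u j) / p j = 1 + e * u j := fun j => by
      have := (hp j).ne'
      field_simp
    simp_rw [h4] at h3
    have h5 : ∑ j, A j * (p j * (1 + e * u j)) = ∑ j, A j * p j + e * D := by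
      rw [hD, Finset.mul_sum, ← Finset.sum_add_distrib]
      refine Finset.sum_congr rfl fun j _ => ?_
      rw [hr']; ring
    rw [h5] at h2
    have h6 : lam * (logBarrier n fun j => p j * (1 + e * u j))
        = lam * logBarrier n p - lam * ∑ j, Real.log (1 + e * u j) := by
      rw [← sub_eq_zero]
      linear_combination lam * h3
    simp only [zero_mul, add_zero, Real.log_one, Finset.sum_const_zero, mul_zero, sub_zero]
    linarith
  have hder : HasDerivAt (fun e : ℝ => lam * ∑ j, Real.log (1 + e * u j) - e * D)
      (lam * ∑ j, u j - D) 0 := by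
    have h1 : ∀ j ∈ Finset.univ, HasDerivAt (fun e : ℝ => Real.log (1 + e * u j)) (u j) 0 := by
      intro j _
      have := (((hasDerivAt_id (0 : ℝ)).mul_const (u j)).const_add 1).log (by simp)
      simpa using this
    have h2 := ((HasDerivAt.fun_sum h1).const_mul lam).fun_sub ((hasDerivAt_id (0 : ℝ)).mul_const D)
    simpa using h2
  have hopt : lam * ∑ j, u j - D = 0 := hmax.hasDerivAt_eq_zero hder
  have hDq : D = ∑ j, A j * q j - ∑ j, A j * p j := by
    rw [hD, ← Finset.sum_sub_distrib]
    exact Finset.sum_congr rfl fun j _ => by ring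
  have hone : q i / p i - 1 - Real.log (q i / p i) ≤ ∑ j, (u j - Real.log (q j / p j)) :=
    Finset.single_le_sum (f := fun j => u j - Real.log (q j / p j))
      (fun j _ => by
        have := Real.log_le_sub_one_of_pos (div_pos (hq j) (hp j))
        simp only [hu]; linarith) (Finset.mem_univ i)
  have hone' := mul_le_mul_of_nonneg_left hone hlam
  rw [Finset.sum_sub_distrib, mul_sub] at hone'
  have hB : lam * logBarrier n q
      = lam * logBarrier n p - lam * ∑ j, Real.log (q j / p j) := by
    linear_combination lam * logBarrier_sub hp hq
  linarith

/-- Deterministic core of Theorem 1 of the paper (regret of UMAB-NN): log-barrier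
FTRL with inverse learning rate `λ_t = (1/2)·√((Σ_{s<t} ℓ_{s,k_s}²)/n)` on
nonnegative importance-weighted losses. Indexing is 0-based: round `t` ranges
over `0, …, T-1`. -/
theorem umab_nn_regret (n T : ℕ) (hn : 1 ≤ n) (hT : 1 ≤ T) (hnT : 3 ≤ n * T)
    (ℓ : ℕ → Fin n → ℝ) (hℓ : ∀ t < T, ∀ j, 0 ≤ ℓ t j)
    (k : ℕ → Fin n)
    (p : ℕ → Fin n → ℝ)
    (hp : ∀ t < T, (∀ j, 0 < p t j) ∧ ∑ j, p t j = 1)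
    (lhat : ℕ → Fin n → ℝ)
    (hlhat : ∀ t, ∀ j, lhat t j = if j = k t then ℓ t j / p t j else 0)
    (hpmin : ∀ t < T, ∀ q : Fin n → ℝ, (∀ j, 0 < q j) → ∑ j, q j = 1 →
      (∑ s ∈ range t, ∑ j, lhat s j * p t j)
        + ((1 : ℝ) / 2) * Real.sqrt ((∑ s ∈ range t, (ℓ s (k s)) ^ 2) / n)
            * (∑ j, (Real.log (1 / p t j) - Real.log (1 / (n : ℝ))))
      ≤ (∑ s ∈ range t, ∑ j, lhat s j * q j)
        + ((1 : ℝ) / 2) * Real.sqrt ((∑ s ∈ range t, (ℓ s (k s)) ^ 2) / n)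
            * (∑ j, (Real.log (1 / q j) - Real.log (1 / (n : ℝ)))))
    (pdag : Fin n → ℝ)
    (hpdag : (∀ j, 1 / ((n : ℝ) * T) ≤ pdag j) ∧ ∑ j, pdag j = 1) :
    ∑ t ∈ range T, ∑ j, lhat t j * (p t j - pdag j)
      ≤ 4 * Real.sqrt ((n : ℝ) * ∑ t ∈ range T, (ℓ t (k t)) ^ 2)
          * Real.log ((n : ℝ) * T)
        + 3.5 * Real.sqrt (n : ℝ)
          * (range T).sup' (nonempty_range_iff.mpr (by omega))
              (fun t => ℓ t (k t)) := by
  have hn' : (0 : ℝ) < n := by exact_mod_cast hn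
  have hs1 : 1 ≤ Real.sqrt (n : ℝ) := by
    rw [Real.one_le_sqrt]; exact_mod_cast hn
  set V : ℕ → ℝ := fun m => ∑ s ∈ range m, (ℓ s (k s)) ^ 2 with hV
  have hV0 : ∀ m, 0 ≤ V m := fun m => Finset.sum_nonneg fun _ _ => sq_nonneg _
  have hVs : ∀ m, V (m + 1) = V m + (ℓ m (k m)) ^ 2 := fun m => Finset.sum_range_succ _ _
  have hsq : ∀ m, Real.sqrt (V m / n) = Real.sqrt (V m) / Real.sqrt n := fun m =>
    Real.sqrt_div (hV0 m) _
  have hlin : ∀ t, ∀ q : Fin n → ℝ,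
      ∑ j, lhat t j * q j = ℓ t (k t) * (q (k t) / p t (k t)) := by
    intro t q
    simp_rw [hlhat, ite_mul, zero_mul]
    rw [Finset.sum_ite_eq' Finset.univ (k t) (fun j => ℓ t j / p t j * q j)]
    simp only [Finset.mem_univ, if_true]
    ring
  have hswap : ∀ m, ∀ q : Fin n → ℝ, ∑ s ∈ range m, ∑ j, lhat s j * q j
      = ∑ j, (∑ s ∈ range m, lhat s j) * q j := by
    intro m q
    rw [Finset.sum_comm]
    simp_rw [Finset.sum_mul]
  have key : ∀ m ≤ T, ∀ q : Fin n → ℝ, (∀ j, 0 < q j) → ∑ j, q j = 1 →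
      ∑ t ∈ range m, ℓ t (k t) ≤ ∑ s ∈ range m, ∑ j, lhat s j * q j
        + (1 : ℝ) / 2 * Real.sqrt (V m / n) * logBarrier n q
        + 5 / 2 * Real.sqrt n * Real.sqrt (V m) := by
    intro m
    induction m with
    | zero => intro _ q _ _; simp [hV]
    | succ m ih =>
      intro hm q hq hq1
      have hmT : m < T := hm
      obtain ⟨hpp, hp1⟩ := hp m hmT
      have hih := ih hmT.le (p m) hpp hp1
      have hgrow := barrier_growth (fun j => ∑ s ∈ range m, lhat s j) (p m) q
        ((1 : ℝ) / 2 * Real.sqrt (V m / n)) (by positivity) hpp hp1 hq hq1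
        (fun r hr hr1 => by
          have := hpmin m hmT r hr hr1
          rw [hswap, hswap] at this
          exact this) (k m)
      simp only [← hswap] at hgrow
      have hx : 0 < q (k m) / p m (k m) := div_pos (hq _) (hpp _)
      have hstab := stability_step (hℓ m hmT (k m)) (Real.sqrt_nonneg (V m))
        (Real.sqrt_nonneg (V (m + 1))) hs1
        (by rw [Real.sq_sqrt (hV0 _), Real.sq_sqrt (hV0 _), hVs]) hx
      rw [← hsq] at hstab
      have hmono : Real.sqrt (V m / n) ≤ Real.sqrt (V (m + 1) / n) := by
        apply Real.sqrt_le_sqrt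
        have : V m ≤ V (m + 1) := by rw [hVs]; linarith [sq_nonneg (ℓ m (k m))]
        gcongr
      have hreg := mul_le_mul_of_nonneg_right hmono (logBarrier_nonneg hn hq hq1)
      rw [Finset.sum_range_succ, Finset.sum_range_succ, hlin m q]
      linarith
  have hNT : (3 : ℝ) ≤ (n : ℝ) * T := by exact_mod_cast hnT
  have hNT0 : (0 : ℝ) < (n : ℝ) * T := by linarith
  have hlog : 1 ≤ Real.log ((n : ℝ) * T) := by
    rw [Real.le_log_iff_exp_le hNT0]
    linarith [Real.exp_one_lt_three]
  have hdpos : ∀ j, 0 < pdag j := fun j =>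
    lt_of_lt_of_le (by positivity) (hpdag.1 j)
  have hfin := key T le_rfl pdag hdpos hpdag.2
  have hbar : logBarrier n pdag ≤ n * (2 * Real.log ((n : ℝ) * T)) := by
    have : logBarrier n pdag ≤ ∑ _j : Fin n, 2 * Real.log ((n : ℝ) * T) := by
      refine Finset.sum_le_sum fun j _ => ?_
      have h1 := Real.log_le_log (by positivity) (hpdag.1 j)
      have h2 : Real.log (n : ℝ) ≤ Real.log ((n : ℝ) * T) :=
        Real.log_le_log hn' (le_mul_of_one_le_right hn'.le (by exact_mod_cast hT))
      simp only [one_div, Real.log_inv] at h1 ⊢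
      linarith
    simpa using this
  have hregret : ∑ t ∈ range T, ∑ j, lhat t j * (p t j - pdag j)
      = ∑ t ∈ range T, ℓ t (k t) - ∑ t ∈ range T, ∑ j, lhat t j * pdag j := by
    rw [← Finset.sum_sub_distrib]
    refine Finset.sum_congr rfl fun t ht => ?_
    simp_rw [mul_sub]
    rw [Finset.sum_sub_distrib, hlin t (p t),
      div_self ((hp t (Finset.mem_range.mp ht)).1 _).ne', mul_one]
  have hmax : 0 ≤ (range T).sup' (nonempty_range_iff.mpr (by omega)) (fun t => ℓ t (k t)) :=
    (hℓ 0 hT (k 0)).trans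
      (Finset.le_sup' (fun t => ℓ t (k t)) (Finset.mem_range.mpr hT))
  have hmax' := mul_nonneg (mul_nonneg (by norm_num : (0 : ℝ) ≤ 3.5) (Real.sqrt_nonneg n)) hmax
  have hprod : Real.sqrt ((n : ℝ) * V T) = Real.sqrt n * Real.sqrt (V T) :=
    Real.sqrt_mul hn'.le _
  have hpen : (1 : ℝ) / 2 * Real.sqrt (V T / n) * logBarrier n pdag
      ≤ Real.sqrt n * Real.sqrt (V T) * Real.log ((n : ℝ) * T) := by
    refine (mul_le_mul_of_nonneg_left hbar (by positivity)).trans_eq ?_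
    rw [hsq]
    have h0 : Real.sqrt (n : ℝ) ≠ 0 := by positivity
    field_simp
    rw [Real.sq_sqrt hn'.le]
  have hsv : 0 ≤ Real.sqrt n * Real.sqrt (V T) := by positivity
  have hlead := mul_le_mul_of_nonneg_left hlog hsv
  have hlead0 : 0 ≤ Real.sqrt n * Real.sqrt (V T) * Real.log ((n : ℝ) * T) := by
    linarith
  rw [hregret, hprod]
  linarith
end

section
/- Let T ≥ 1 and let a_1, …, a_T be nonnegative reals. For each t define D_t = a_t if Σ_{s=1}^{t−1} a_s² = 0, and D_t = min( a_t² / √(Σ_{s=1}^{t−1} a_s²), a_t ) otherwise. Then Σ_{t=1}^T D_t ≤ 3.5·√( Σ_{t=1}^T a_t² ) + 3.5·max_{t ∈ [T]} a_t. -/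
/-!
The sum telescopes, and the term with the maximum is only slack. Write `x` and `y` for the square
roots of the prefix sums before and after a round with entry `a`, so that `y² = x² + a²`. Each
term is at most `3.5 (y - x)`. If `y ≤ 2.5 x`, then
`a² / x = (y - x)(y + x) / x ≤ 3.5 (y - x)`. If `y > 2.5 x`, then `y - x ≥ 0.6 y ≥ 0.6 a`,
which already exceeds `a / 3.5`.
-/

open Finset

/-- One round: the term is dominated by the increase of the square root of the prefix sum. -/
lemma round_le_sqrt_increment {x y a : ℝ} (hx : 0 < x) (hy : 0 ≤ y) (h : y ^ 2 = x ^ 2 + a ^ 2) :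
    min (a ^ 2 / x) a ≤ 3.5 * (y - x) := by
  have hay : a ≤ y := by nlinarith [sq_nonneg x]
  have hxy : x ≤ y := by nlinarith [sq_nonneg a]
  rcases le_or_gt y (2.5 * x) with hc | hc
  · refine (min_le_left _ _).trans ?_
    rw [div_le_iff₀ hx]
    nlinarith [mul_nonneg (sub_nonneg.2 hxy) (sub_nonneg.2 hc)]
  · refine (min_le_right _ _).trans ?_
    linarith

/-- Lemma 7 of the paper (Lemma 3 of Orabona–Pál): bound on the sum of the
per-round terms `min(a_t²/√(Σ_{s<t} a_s²), a_t)` (interpreted as `a_t` when the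
prefix sum is zero). Indexing is 0-based over `t = 0, …, T-1`. -/
theorem orabona_pal_sum_bound (T : ℕ) (hT : 1 ≤ T)
    (a : ℕ → ℝ) (ha : ∀ t < T, 0 ≤ a t)
    (D : ℕ → ℝ)
    (hD : ∀ t < T, D t =
      if (∑ s ∈ range t, (a s) ^ 2) = 0 then a t
      else min ((a t) ^ 2 / Real.sqrt (∑ s ∈ range t, (a s) ^ 2)) (a t)) :
    ∑ t ∈ range T, D t
      ≤ 3.5 * Real.sqrt (∑ t ∈ range T, (a t) ^ 2)
        + 3.5 * (range T).sup' (nonempty_range_iff.mpr (by omega)) a := by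
  have hsum : ∀ n ≤ T, ∑ t ∈ range n, D t ≤ 3.5 * Real.sqrt (∑ t ∈ range n, (a t) ^ 2) := by
    intro n
    induction n with
    | zero => simp
    | succ n ih =>
      intro hn
      have hS : 0 ≤ ∑ s ∈ range n, (a s) ^ 2 := sum_nonneg fun _ _ => sq_nonneg _
      have ih := ih (by omega)
      have han := ha n hn
      rw [sum_range_succ, sum_range_succ, hD n hn]
      split_ifs with h0
      · rw [h0] at ih ⊢
        rw [zero_add, Real.sqrt_sq han]
        rw [Real.sqrt_zero] at ih
        linarith
      · have hx : 0 < Real.sqrt (∑ s ∈ range n, (a s) ^ 2) :=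
          Real.sqrt_pos.2 (lt_of_le_of_ne hS (Ne.symm h0))
        have hstep := round_le_sqrt_increment (a := a n) hx
          (Real.sqrt_nonneg (∑ s ∈ range n, (a s) ^ 2 + a n ^ 2))
          (by rw [Real.sq_sqrt hS, Real.sq_sqrt (by positivity)])
        linarith
  have hmax : 0 ≤ (range T).sup' (nonempty_range_iff.mpr (by omega)) a :=
    (ha 0 hT).trans (le_sup' a (mem_range.2 hT))
  linarith [hsum T le_rfl]
end

section
/- Let a_1, …, a_T be strictly positive reals and let α > 1. Define S_t = Σ_{s=1}^{t} a_s² (with S_0 = 0) and M_t = max_{s ≤ t} a_s (with M_0 = 0). For each t ∈ [T], define D_t = a_t if S_{t−1} = 0 and D_t = min( a_t²/√(S_{t−1}), a_t ) otherwise. Then for every t ∈ [T], D_t ≤ 2·√(1+α²)·( √(S_t) − √(S_{t−1}) ) + (α/(α−1))·( M_t − M_{t−1} ). -/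
/-!
Write `s = √(S t)`, `x = a t` and `s' = √(S (t + 1)) = √(s² + x²)`. The running maximum satisfies
`M t ≤ s`, and there are two regimes.

* If `x ≤ α s`, then `s + s' ≤ 2 √(1 + α²) s`, so from `x² = (s' - s)(s' + s)` the bound
  `x² / s ≤ 2 √(1 + α²) (s' - s)` follows, and the increment of `M` is nonnegative.
* If `x > α s`, then `M (t + 1) - M t ≥ x - s ≥ x (α - 1) / α`, so the increment of `M` alone pays
  for `x`, and the increment of `√S` is nonnegative. This regime contains the case `S t = 0`.
-/

open Finset

/-- The key per-step inequality in the proof of Lemma 7 of the paper.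
Here `S t = Σ_{s<t} a_s²` (so `S 0 = 0`), `M` is the running maximum with
`M 0 = 0`, and `D t` is the per-round term. Indexing is 0-based. -/
theorem orabona_pal_per_step (T : ℕ) (hT : 1 ≤ T)
    (a : ℕ → ℝ) (ha : ∀ t < T, 0 < a t)
    (α : ℝ) (hα : 1 < α)
    (S M D : ℕ → ℝ)
    (hS : ∀ t, S t = ∑ s ∈ range t, (a s) ^ 2)
    (hM0 : M 0 = 0) (hM : ∀ t, M (t + 1) = max (M t) (a t))
    (hD : ∀ t < T, D t =
      if S t = 0 then a t else min ((a t) ^ 2 / Real.sqrt (S t)) (a t)) :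
    ∀ t < T,
      D t ≤ 2 * Real.sqrt (1 + α ^ 2) * (Real.sqrt (S (t + 1)) - Real.sqrt (S t))
        + (α / (α - 1)) * (M (t + 1) - M t) := by
  intro t ht
  have hS0 : ∀ t, 0 ≤ S t := fun t => by
    rw [hS]; exact sum_nonneg fun _ _ => sq_nonneg _
  have hSs : ∀ t, S (t + 1) = S t + a t ^ 2 := fun t => by
    rw [hS, hS, sum_range_succ]
  have hMS : ∀ t, M t ≤ Real.sqrt (S t) := by
    intro t
    induction t with
    | zero => rw [hM0]; exact Real.sqrt_nonneg _
    | succ n ih =>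
      rw [hM, hSs]
      refine max_le (ih.trans (Real.sqrt_le_sqrt (by nlinarith [sq_nonneg (a n)]))) ?_
      exact Real.le_sqrt_of_sq_le (by linarith [hS0 n])
  have hx := ha t ht
  have hMt := hMS t
  have hMm : M t ≤ M (t + 1) := by rw [hM]; exact le_max_left _ _
  have hMa : a t ≤ M (t + 1) := by rw [hM]; exact le_max_right _ _
  have hmono : Real.sqrt (S t) ≤ Real.sqrt (S (t + 1)) :=
    Real.sqrt_le_sqrt (by rw [hSs]; nlinarith [sq_nonneg (a t)])
  have hs0 := Real.sqrt_nonneg (S t)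
  have hs2 := Real.sq_sqrt (hS0 t)
  have hs2' := Real.sq_sqrt (hS0 (t + 1))
  have hα1 : 0 < α - 1 := by linarith
  have hc1 : 1 ≤ Real.sqrt (1 + α ^ 2) :=
    Real.one_le_sqrt.mpr (by nlinarith [sq_nonneg α])
  have hc2 : Real.sqrt (1 + α ^ 2) ^ 2 = 1 + α ^ 2 := Real.sq_sqrt (by positivity)
  rw [hD t ht]
  have hdiff : Real.sqrt (S (t + 1)) ^ 2 = Real.sqrt (S t) ^ 2 + a t ^ 2 := by
    rw [hs2', hs2, hSs]
  set s := Real.sqrt (S t)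
  set s' := Real.sqrt (S (t + 1))
  set c := Real.sqrt (1 + α ^ 2)
  have hfrac : 0 ≤ α / (α - 1) := by positivity
  rcases le_or_gt (a t) (α * s) with h | h
  · have hspos : 0 < s := by
      by_contra hn
      have : s = 0 := le_antisymm (not_lt.mp hn) hs0
      rw [this] at h; linarith
    have hSne : S t ≠ 0 := by
      intro h0
      rw [h0] at hs2
      nlinarith
    rw [if_neg hSne]
    have hle : s' ≤ c * s := by
      refine (sq_le_sq₀ (Real.sqrt_nonneg _) (by positivity)).mp ?_
      rw [hdiff, mul_pow, hc2]
      nlinarith [pow_le_pow_left₀ hx.le h 2]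
    have hstep : a t ^ 2 / s ≤ 2 * c * (s' - s) := by
      rw [div_le_iff₀ hspos]
      have h1 : s' + s ≤ 2 * c * s := by nlinarith
      nlinarith [mul_le_mul_of_nonneg_left h1 (sub_nonneg.mpr hmono)]
    have := mul_nonneg hfrac (sub_nonneg.mpr hMm)
    linarith [min_le_left (a t ^ 2 / s) (a t)]
  · have hDle : (if S t = 0 then a t else min (a t ^ 2 / s) (a t)) ≤ a t := by
      split_ifs
      · exact le_rfl
      · exact min_le_right _ _
    have hmax : a t ≤ α / (α - 1) * (M (t + 1) - M t) := by
      rw [div_mul_eq_mul_div, le_div_iff₀ hα1]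
      nlinarith [mul_le_mul_of_nonneg_left (show a t - s ≤ M (t + 1) - M t by linarith)
        (show 0 ≤ α by linarith)]
    have : 0 ≤ 2 * c * (s' - s) := mul_nonneg (by linarith) (sub_nonneg.mpr hmono)
    linarith
end

section
/- Let n ≥ 1, let L ∈ ℝⁿ, let C > 0, and let η, η′ > 0 satisfy η′ ≤ η ≤ C·η′. Let x be the unique minimizer over the interior simplex {p ∈ Δ_n : p_j > 0 for all j} of ⟨L, p⟩ + (1/η)·Ψ(p), and let x′ be the unique minimizer over the interior simplex of ⟨L, p⟩ + (1/η′)·Ψ(p), where Ψ is the log-barrier regularizer. Then x′_k ≤ C·x_k for every k ∈ {1,…,n}. -/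
open Finset

/-!
At an interior minimizer `x` of `⟨L, p⟩ + (1/η) Ψ(p)` the gradient is constant across coordinates
(Lagrange condition): `L i - 1 / (η x i)` does not depend on `i`. Subtracting the conditions for
`(x, η)` and `(x', η')` eliminates `L`, so `1 / (η x i) - 1 / (η' x' i)` equals a constant `c`.
Since `x` and `x'` have the same sum, `x' j ≤ x j` for some `j`, and together with `η' ≤ η` this
gives `c ≤ 0`. Hence `η' x' k ≤ η x k ≤ C η' x k` for every `k`.
-/

/-- First-order optimality of a log-barrier minimizer over the interior of the simplex: all
coordinates of the gradient agree. -/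
theorem log_barrier_stationary (n : ℕ) (L : Fin n → ℝ) (η : ℝ) (x : Fin n → ℝ)
    (hx : ∀ j, 0 < x j) (hsum : ∑ j, x j = 1)
    (hxmin : ∀ q : Fin n → ℝ, (∀ j, 0 < q j) → ∑ j, q j = 1 →
      (∑ j, L j * x j)
          + (1 / η) * (∑ j, (Real.log (1 / x j) - Real.log (1 / (n : ℝ))))
        ≤ (∑ j, L j * q j)
          + (1 / η) * (∑ j, (Real.log (1 / q j) - Real.log (1 / (n : ℝ)))))
    (a b : Fin n) : L a - 1 / η * (1 / x a) = L b - 1 / η * (1 / x b) := by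
  -- The direction `e_a - e_b` is tangent to the simplex.
  set d : Fin n → ℝ := fun j => (if j = a then 1 else 0) - (if j = b then 1 else 0) with hd
  have hdsum : ∑ j, d j = 0 := by simp [hd, Finset.sum_sub_distrib]
  let f : ℝ → ℝ := fun t => (∑ j, L j * (x j + t * d j))
      + (1 / η) * (∑ j, (Real.log (1 / (x j + t * d j)) - Real.log (1 / (n : ℝ))))
  have hlin : ∀ j, HasDerivAt (fun t : ℝ => x j + t * d j) (d j) 0 := fun j => by
    simpa using ((hasDerivAt_id (0 : ℝ)).mul_const (d j)).const_add (x j)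
  have hlog : ∀ j, HasDerivAt
      (fun t : ℝ => Real.log (1 / (x j + t * d j)) - Real.log (1 / (n : ℝ)))
      (-(d j / x j)) 0 := fun j => by
    have h := ((hlin j).log (by simpa using (hx j).ne')).neg.sub_const (Real.log (1 / (n : ℝ)))
    simpa [one_div, Real.log_inv] using h
  have hderiv : HasDerivAt f ((∑ j, L j * d j) + (1 / η) * ∑ j, -(d j / x j)) 0 :=
    (HasDerivAt.fun_sum fun j _ => (hlin j).const_mul (L j)).add
      ((HasDerivAt.fun_sum fun j _ => hlog j).const_mul (1 / η))
  have hpos : ∀ᶠ t in nhds (0 : ℝ), ∀ j, 0 < x j + t * d j :=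
    Filter.eventually_all.2 fun j =>
      (hlin j).continuousAt.eventually (lt_mem_nhds (by simpa using hx j))
  have hmin : IsLocalMin f 0 := by
    filter_upwards [hpos] with t ht
    have hq : ∑ j, (x j + t * d j) = 1 := by
      rw [Finset.sum_add_distrib, ← Finset.mul_sum, hdsum, hsum]; ring
    simpa [f] using hxmin (fun j => x j + t * d j) ht hq
  have h0 := hmin.hasDerivAt_eq_zero hderiv
  simp only [hd, mul_sub, sub_div, ite_div, Finset.sum_neg_distrib, Finset.sum_sub_distrib,
    mul_ite, mul_one, mul_zero, zero_div, Finset.sum_ite_eq', Finset.mem_univ, if_true] at h0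
  linarith

/-- Lemma 9 of the paper: shrinking the learning rate of log-barrier FTRL by at
most a factor `C` increases each coordinate of the minimizer by at most a
factor `C`. -/
theorem log_barrier_learning_rate_stability (n : ℕ) (hn : 1 ≤ n)
    (L : Fin n → ℝ) (C : ℝ) (hC : 0 < C)
    (η η' : ℝ) (hη' : 0 < η') (hη : 0 < η)
    (h1 : η' ≤ η) (h2 : η ≤ C * η')
    (x : Fin n → ℝ) (hx : (∀ j, 0 < x j) ∧ ∑ j, x j = 1)
    (hxmin : ∀ q : Fin n → ℝ, (∀ j, 0 < q j) → ∑ j, q j = 1 →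
      (∑ j, L j * x j)
          + (1 / η) * (∑ j, (Real.log (1 / x j) - Real.log (1 / (n : ℝ))))
        ≤ (∑ j, L j * q j)
          + (1 / η) * (∑ j, (Real.log (1 / q j) - Real.log (1 / (n : ℝ)))))
    (x' : Fin n → ℝ) (hx' : (∀ j, 0 < x' j) ∧ ∑ j, x' j = 1)
    (hx'min : ∀ q : Fin n → ℝ, (∀ j, 0 < q j) → ∑ j, q j = 1 →
      (∑ j, L j * x' j)
          + (1 / η') * (∑ j, (Real.log (1 / x' j) - Real.log (1 / (n : ℝ))))
        ≤ (∑ j, L j * q j)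
          + (1 / η') * (∑ j, (Real.log (1 / q j) - Real.log (1 / (n : ℝ))))) :
    ∀ k, x' k ≤ C * x k := by
  intro k
  obtain ⟨hx, hs⟩ := hx
  obtain ⟨hx', hs'⟩ := hx'
  obtain ⟨j, -, hj⟩ : ∃ j ∈ (Finset.univ : Finset (Fin n)), x' j ≤ x j :=
    Finset.exists_le_of_sum_le ⟨k, Finset.mem_univ k⟩ (by rw [hs, hs'])
  have e := log_barrier_stationary n L η x hx hs hxmin k j
  have e' := log_barrier_stationary n L η' x' hx' hs' hx'min k j
  have hc : 1 / η * (1 / x j) ≤ 1 / η' * (1 / x' j) := by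
    have := hx j
    have := hx' j
    gcongr
  have hk : 1 / η * (1 / x k) ≤ 1 / η' * (1 / x' k) := by linarith
  rw [one_div_mul_one_div, one_div_mul_one_div,
    one_div_le_one_div (mul_pos hη (hx k)) (mul_pos hη' (hx' k))] at hk
  have hCk : η * x k ≤ C * η' * x k := mul_le_mul_of_nonneg_right h2 (hx k).le
  exact le_of_mul_le_mul_left (by linarith : η' * x' k ≤ η' * (C * x k)) hη'
end

section
/- Let n ≥ 1, L ∈ ℝⁿ, k ∈ {1,…,n}, and let η, η′ > 0 satisfy η′ ≤ η ≤ 3·η′. Let x be the unique minimizer over the interior simplex {p ∈ Δ_n : p_j > 0 for all j} of ⟨L, p⟩ + (1/η)·Ψ(p), where Ψ is the log-barrier regularizer, and let x′ be the unique minimizer over the interior simplex of ⟨L + (l/x_k)·e_k, p⟩ + (1/η′)·Ψ(p). If −1/(2η) ≤ l ≤ 0, then x′_k ≤ 6·x_k. -/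
/-! Moving mass from coordinate `j` to coordinate `i` keeps a positive probability vector feasible for
small steps of either sign, so at a minimizer the partial derivatives of the objective,
`A i - 1 / (η p i)`, agree for all `i` (`logBarrier_first_order`).

If `x' k > 6 x k`, then since both vectors sum to one some other coordinate satisfies `x' j < x j`.
Subtracting the first-order conditions of the two problems for the pair `(j, k)` gives
`1 / (η x j) - 1 / (η' x' j) = 1 / (η x k) + l / x k - 1 / (η' x' k)`.
The left side is negative because `η' x' j < η x j`, whereas the bounds on `l` and `η` make the right
side at least `1 / (2 η x k) - 1 / (6 η' x k) ≥ 0`. -/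

open Finset

/-- First-order (Lagrange) condition for a minimizer of a linear function plus `c` times the
log-barrier: the partial derivatives at any two coordinates coincide. The constant `C` plays the
role of the normalization `log (1 / n)`. -/
theorem logBarrier_first_order {n : ℕ} (A : Fin n → ℝ) (c C : ℝ) (p : Fin n → ℝ)
    (hp : ∀ j, 0 < p j) (hsum : ∑ j, p j = 1)
    (hmin : ∀ q : Fin n → ℝ, (∀ j, 0 < q j) → ∑ j, q j = 1 →
      (∑ j, A j * p j) + c * (∑ j, (Real.log (1 / p j) - C))
        ≤ (∑ j, A j * q j) + c * (∑ j, (Real.log (1 / q j) - C)))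
    (i j : Fin n) : A i - c / p i = A j - c / p j := by
  -- The direction `e_i - e_j`, tangent to the simplex.
  let d : Fin n → ℝ := fun m => (if m = i then 1 else 0) - (if m = j then 1 else 0)
  have hd : ∑ m, d m = 0 := by simp [d]
  let f : ℝ → ℝ := fun t => (∑ m, A m * (p m + t * d m))
    + c * (∑ m, (Real.log (1 / (p m + t * d m)) - C))
  have hlocal : IsLocalMin f 0 := by
    have hpos : ∀ᶠ t in nhds (0 : ℝ), ∀ m, 0 < p m + t * d m := by
      rw [Filter.eventually_all]
      intro m
      have hc : ContinuousAt (fun t : ℝ => p m + t * d m) 0 := by fun_prop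
      exact hc.eventually_const_lt (by simpa using hp m)
    filter_upwards [hpos] with t ht
    have hq := hmin (fun m => p m + t * d m) ht
      (by rw [Finset.sum_add_distrib, ← Finset.mul_sum, hd, hsum]; ring)
    simpa [f] using hq
  have hderiv : HasDerivAt f
      ((∑ m, A m * d m) + c * (∑ m, -(d m / p m))) 0 := by
    have hline : ∀ m, HasDerivAt (fun t : ℝ => p m + t * d m) (d m) 0 := by
      intro m
      simpa using ((hasDerivAt_id (0 : ℝ)).mul_const (d m)).const_add (p m)
    refine HasDerivAt.add ?_ (HasDerivAt.const_mul c ?_)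
    · exact HasDerivAt.fun_sum fun m _ => (hline m).const_mul (A m)
    · refine HasDerivAt.fun_sum fun m _ => ?_
      have hlog := ((hline m).log (by simpa using (hp m).ne')).neg.sub_const C
      simpa [one_div, Real.log_inv] using hlog
  have hzero := hlocal.hasDerivAt_eq_zero hderiv
  have hA : ∑ m, A m * d m = A i - A j := by
    simp [d, mul_sub, Finset.sum_sub_distrib]
  have hB : ∑ m, -(d m / p m) = 1 / p j - 1 / p i := by
    simp [d, sub_div, Finset.sum_sub_distrib, ite_div]
  rw [hA, hB] at hzero
  linear_combination hzero

/-- Second inequality of Lemma 5 of the paper: for two consecutive log-barrier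
FTRL minimizers, under the clipping condition `-1/(2η) ≤ l ≤ 0` and the
learning-rate stability `η' ≤ η ≤ 3η'`, the new probability of the played arm
exceeds the old one by at most a factor 6. -/
theorem log_barrier_consecutive_ratio (n : ℕ) (hn : 1 ≤ n)
    (L : Fin n → ℝ) (k : Fin n)
    (η η' : ℝ) (hη : 0 < η) (hη' : 0 < η')
    (h1 : η' ≤ η) (h2 : η ≤ 3 * η')
    (l : ℝ) (hl1 : -(1 / (2 * η)) ≤ l) (hl2 : l ≤ 0)
    (x : Fin n → ℝ) (hx : (∀ j, 0 < x j) ∧ ∑ j, x j = 1)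
    (hxmin : ∀ q : Fin n → ℝ, (∀ j, 0 < q j) → ∑ j, q j = 1 →
      (∑ j, L j * x j)
          + (1 / η) * (∑ j, (Real.log (1 / x j) - Real.log (1 / (n : ℝ))))
        ≤ (∑ j, L j * q j)
          + (1 / η) * (∑ j, (Real.log (1 / q j) - Real.log (1 / (n : ℝ)))))
    (x' : Fin n → ℝ) (hx' : (∀ j, 0 < x' j) ∧ ∑ j, x' j = 1)
    (hx'min : ∀ q : Fin n → ℝ, (∀ j, 0 < q j) → ∑ j, q j = 1 →
      (∑ j, (L j + (if j = k then l / x k else 0)) * x' j)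
          + (1 / η') * (∑ j, (Real.log (1 / x' j) - Real.log (1 / (n : ℝ))))
        ≤ (∑ j, (L j + (if j = k then l / x k else 0)) * q j)
          + (1 / η') * (∑ j, (Real.log (1 / q j) - Real.log (1 / (n : ℝ))))) :
    x' k ≤ 6 * x k := by
  obtain ⟨hxpos, hxsum⟩ := hx
  obtain ⟨hxpos', hxsum'⟩ := hx'
  by_contra! hlt
  have hxk := hxpos k
  have hex : ∃ j, x' j < x j := by
    by_contra! hle
    have hs : ∑ j, x j < ∑ j, x' j :=
      Finset.sum_lt_sum (fun j _ => hle j) ⟨k, Finset.mem_univ k, by linarith⟩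
    linarith
  obtain ⟨j, hj⟩ := hex
  have hjk : j ≠ k := by
    rintro rfl
    linarith
  have e1 := logBarrier_first_order L (1 / η) _ x hxpos hxsum hxmin j k
  have e2 := logBarrier_first_order (fun j => L j + (if j = k then l / x k else 0))
    (1 / η') _ x' hxpos' hxsum' hx'min j k
  simp only [if_neg hjk, if_true, add_zero, div_div] at e1 e2
  have hleft : 1 / (η * x j) < 1 / (η' * x' j) := by
    have hj' := hxpos' j
    apply one_div_lt_one_div_of_lt (by positivity)
    calc η' * x' j < η' * x j := by gcongr
      _ ≤ η * x j := by have := hxpos j; gcongr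
  have hright : 1 / (η' * x' k) ≤ 1 / (2 * η * x k) := by
    apply one_div_le_one_div_of_le (by positivity)
    calc 2 * η * x k ≤ 2 * (3 * η') * x k := by gcongr
      _ = η' * (6 * x k) := by ring
      _ ≤ η' * x' k := by gcongr
  have hl : -(1 / (2 * η * x k)) ≤ l / x k := by
    rw [le_div_iff₀ hxk]
    calc -(1 / (2 * η * x k)) * x k = -(1 / (2 * η)) := by field_simp
      _ ≤ l := hl1
  have hhalf : 1 / (η * x k) = 2 * (1 / (2 * η * x k)) := by field_simp
  linarith
end

section
/- Let n ≥ 1, let p ∈ Δ_n, let 0 < ρ ≤ 1/(2n²), and let k* ∈ {1,…,n} satisfy p_{k*} = max_{k} p_k. Define c ∈ ℝⁿ by c_k = 1 if k ≠ k* and p_k < ρ; c_{k*} = −Σ_{k ≠ k*} c_k; and c_k = 0 otherwise, and set p′ = p + ρ·c. Then: (i) p′ ∈ Δ_n; (ii) p′_k ≥ ρ for every k ∈ {1,…,n}; (iii) p′_{k*} ≥ 1/(2n); and (iv) p_k ≤ 2·p′_k for every k ∈ {1,…,n}. -/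
/-!
A largest entry of a probability vector is at least its average, so `p kstar ≥ 1/n`. At most `n`
arms receive the extra mass `ρ`, all of it taken from `kstar`, so `kstar` loses at most
`n * ρ ≤ 1/(2n)`, which is at most half of `p kstar`. It thus keeps at least
`1/(2n) ≥ ρ` and at least half of its mass. Every other entry does not decrease, and ends up at
least `ρ`: either it was already, or `ρ` was added to it. The total is unchanged because `c` sums
to zero.
-/

open Finset

/-- Properties of the extra-exploration distribution of Algorithm 3 of the
paper: `p' = p + ρ·c` is a probability distribution, each of its entries is at
least `ρ`, its entry at the largest arm `k*` is at least `1/(2n)`, and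
`p_k ≤ 2·p'_k` for every arm (first inequality of Lemma 5). -/
theorem extra_exploration_properties (n : ℕ) (hn : 1 ≤ n)
    (p : Fin n → ℝ) (hp : (∀ k, 0 ≤ p k) ∧ ∑ k, p k = 1)
    (ρ : ℝ) (hρ0 : 0 < ρ) (hρ : ρ ≤ 1 / (2 * (n : ℝ) ^ 2))
    (kstar : Fin n) (hkstar : ∀ k, p k ≤ p kstar)
    (c : Fin n → ℝ)
    (hc : ∀ k, c k =
      if k = kstar then
        -(∑ j ∈ Finset.univ.erase kstar, (if p j < ρ then (1 : ℝ) else 0))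
      else if p k < ρ then 1 else 0)
    (p' : Fin n → ℝ) (hp' : ∀ k, p' k = p k + ρ * c k) :
    ((∀ k, 0 ≤ p' k) ∧ ∑ k, p' k = 1)
      ∧ (∀ k, ρ ≤ p' k)
      ∧ 1 / (2 * (n : ℝ)) ≤ p' kstar
      ∧ (∀ k, p k ≤ 2 * p' k) := by
  obtain ⟨hp0, hp1⟩ := hp
  have hn0 : (1 : ℝ) ≤ n := by exact_mod_cast hn
  have hnpos : (0 : ℝ) < n := by linarith
  -- `S` is the number of arms other than `kstar` that receive extra mass `ρ`.
  set S : ℝ := ∑ j ∈ Finset.univ.erase kstar, (if p j < ρ then (1 : ℝ) else 0) with hS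
  have hcstar : c kstar = -S := by rw [hc, if_pos rfl]
  have hcne : ∀ k, k ≠ kstar → c k = if p k < ρ then 1 else 0 := fun k hk => by
    rw [hc, if_neg hk]
  have hSn : S ≤ n := by
    calc S ≤ ∑ j ∈ Finset.univ.erase kstar, (1 : ℝ) := by
          refine Finset.sum_le_sum fun j _ => ?_
          split_ifs <;> norm_num
      _ ≤ ∑ j : Fin n, (1 : ℝ) :=
          Finset.sum_le_sum_of_subset_of_nonneg (Finset.erase_subset _ _)
            fun _ _ _ => zero_le_one
      _ = n := by simp
  have hcsum : ∑ k, c k = 0 := by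
    rw [← Finset.add_sum_erase _ _ (Finset.mem_univ kstar), hcstar,
      Finset.sum_congr rfl fun k hk => hcne k (Finset.ne_of_mem_erase hk)]
    exact neg_add_cancel S
  have hpstar : 1 / (n : ℝ) ≤ p kstar := by
    have h : ∑ k, p k ≤ ∑ _k : Fin n, p kstar := Finset.sum_le_sum fun k _ => hkstar k
    rw [hp1] at h
    simp only [Finset.sum_const, Finset.card_univ, Fintype.card_fin, nsmul_eq_mul] at h
    rw [div_le_iff₀ hnpos]
    linarith
  have hhalf : 1 / (2 * (n : ℝ)) = 1 / (n : ℝ) / 2 := by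
    field_simp
  have hρn : ρ * n ≤ 1 / (2 * (n : ℝ)) := by
    calc ρ * n ≤ 1 / (2 * (n : ℝ) ^ 2) * n := by gcongr
      _ = 1 / (2 * (n : ℝ)) := by field_simp
  have hρS : ρ * S ≤ 1 / (2 * (n : ℝ)) :=
    (mul_le_mul_of_nonneg_left hSn hρ0.le).trans hρn
  have hρle : ρ ≤ 1 / (2 * (n : ℝ)) :=
    (le_mul_of_one_le_right hρ0.le hn0).trans hρn
  have hstar : p' kstar = p kstar - ρ * S := by rw [hp', hcstar]; ring
  have hne : ∀ k, k ≠ kstar → ρ ≤ p' k ∧ p k ≤ p' k := fun k hk => by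
    rw [hp', hcne k hk]
    have := hp0 k
    split_ifs with h
    · constructor <;> linarith
    · constructor <;> linarith
  have hlow : ∀ k, ρ ≤ p' k := fun k => by
    by_cases hk : k = kstar
    · subst hk; linarith
    · exact (hne k hk).1
  refine ⟨⟨fun k => hρ0.le.trans (hlow k), ?_⟩, hlow, by linarith, fun k => ?_⟩
  · simp only [hp', Finset.sum_add_distrib, ← Finset.mul_sum, hcsum, hp1, mul_zero, add_zero]
  · by_cases hk : k = kstar
    · subst hk; linarith
    · linarith [(hne k hk).2, hp0 k]
end

section
/- Let n ≥ 1, let p ∈ Δ_n, let 0 < ρ ≤ 1/(2n²), and let k* ∈ {1,…,n} satisfy p_{k*} = max_k p_k. Define c ∈ ℝⁿ by c_k = 1 if k ≠ k* and p_k < ρ; c_{k*} = −Σ_{k ≠ k*} c_k; and c_k = 0 otherwise, and set p′ = p + ρ·c. Let k₀ ∈ {1,…,n}, let ℓ′ ∈ ℝ with |ℓ′| ≤ L for some L ≥ 0, and define ℓ̂′ ∈ ℝⁿ by ℓ̂′_{k₀} = ℓ′/p′_{k₀} and ℓ̂′_k = 0 for k ≠ k₀. Then |⟨ℓ̂′,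 c⟩| ≤ L·max(2n², 1/ρ). -/
/-! Only the coordinate `k₀` contributes, so the inner product is `ℓ' * (c k₀ / p' k₀)` and it
suffices to show `p' k₀ ≥ 0` and `|c k₀| ≤ M * p' k₀` with `M = max (2n²) (1/ρ)`. Off the maximal
coordinate, either `c k₀ = 0`, or `c k₀ = 1` and `p' k₀ ≥ ρ`. At the maximal coordinate,
`|c kstar| = S ≤ n` is the number of boosted coordinates, and `p kstar ≥ 1/n`, `2n²ρ ≤ 1` give
`2n² * p' kstar = 2n² * p kstar - 2n²ρ * S ≥ 2n - S ≥ S`. -/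

open Finset

/-- Deterministic content of Lemma 12 of the paper: the inner product of the
IW (importance-weighted) estimator built from the exploration distribution
`p' = p + ρ·c` with the exploration direction `c` is bounded by
`L·max(2n², 1/ρ)`. -/
theorem exploration_inner_product_bound (n : ℕ) (hn : 1 ≤ n)
    (p : Fin n → ℝ) (hp : (∀ k, 0 ≤ p k) ∧ ∑ k, p k = 1)
    (ρ : ℝ) (hρ0 : 0 < ρ) (hρ : ρ ≤ 1 / (2 * (n : ℝ) ^ 2))
    (kstar : Fin n) (hkstar : ∀ k, p k ≤ p kstar)
    (c : Fin n → ℝ)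
    (hc : ∀ k, c k =
      if k = kstar then
        -(∑ j ∈ Finset.univ.erase kstar, (if p j < ρ then (1 : ℝ) else 0))
      else if p k < ρ then 1 else 0)
    (p' : Fin n → ℝ) (hp' : ∀ k, p' k = p k + ρ * c k)
    (k₀ : Fin n) (ℓ' L : ℝ) (hL : 0 ≤ L) (hℓ' : |ℓ'| ≤ L)
    (lhat : Fin n → ℝ)
    (hlhat : ∀ k, lhat k = if k = k₀ then ℓ' / p' k₀ else 0) :
    |∑ k, lhat k * c k| ≤ L * max (2 * (n : ℝ) ^ 2) (1 / ρ) := by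
  obtain ⟨hp0, hp1⟩ := hp
  have hn0 : (0 : ℝ) < n := by exact_mod_cast hn
  have hsum : ∑ k, lhat k * c k = ℓ' * (c k₀ / p' k₀) := by
    simp only [hlhat, ite_mul, zero_mul, Finset.sum_ite_eq', Finset.mem_univ, if_true]
    ring
  set M := max (2 * (n : ℝ) ^ 2) (1 / ρ) with hM
  have hM1 : 2 * (n : ℝ) ^ 2 ≤ M := le_max_left _ _
  have hM2 : 1 / ρ ≤ M := le_max_right _ _
  have hM0 : 0 ≤ M := le_trans (by positivity) hM1
  have key : 0 ≤ p' k₀ ∧ |c k₀| ≤ M * p' k₀ := by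
    by_cases hk : k₀ = kstar
    · subst hk
      have hck := hc k₀
      rw [if_pos rfl] at hck
      set S := ∑ j ∈ Finset.univ.erase k₀, (if p j < ρ then (1 : ℝ) else 0) with hS
      have hS0 : 0 ≤ S := Finset.sum_nonneg fun j _ => by split_ifs <;> norm_num
      have hSn : S ≤ n := by
        calc S ≤ ∑ j ∈ Finset.univ.erase k₀, (1 : ℝ) :=
              Finset.sum_le_sum fun j _ => by split_ifs <;> norm_num
          _ ≤ ∑ j : Fin n, (1 : ℝ) :=
              Finset.sum_le_sum_of_subset_of_nonneg (Finset.erase_subset _ _)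
                fun _ _ _ => zero_le_one
          _ = n := by simp
      have hmax : 1 ≤ n * p k₀ := by
        calc (1 : ℝ) = ∑ k, p k := hp1.symm
          _ ≤ ∑ _k : Fin n, p k₀ := Finset.sum_le_sum fun k _ => hkstar k
          _ = n * p k₀ := by simp
      have hρ' : ρ * (2 * (n : ℝ) ^ 2) ≤ 1 := (le_div_iff₀ (by positivity)).1 hρ
      have h1 : ρ * (2 * (n : ℝ) ^ 2) * S ≤ S := mul_le_of_le_one_left hS0 hρ'
      have h2 : (2 * (n : ℝ)) * 1 ≤ 2 * n * (n * p k₀) := by gcongr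
      have h3 : S ≤ 2 * (n : ℝ) ^ 2 * p' k₀ := by
        rw [hp', hck]
        linarith
      have h4 : 0 ≤ p' k₀ := nonneg_of_mul_nonneg_right (hS0.trans h3) (by positivity)
      refine ⟨h4, ?_⟩
      rw [hck, abs_neg, abs_of_nonneg hS0]
      exact h3.trans (by gcongr)
    · have hck := hc k₀
      rw [if_neg hk] at hck
      have hpk := hp' k₀
      have h0 := hp0 k₀
      split_ifs at hck
      · rw [hck] at hpk ⊢
        have hle : ρ ≤ p' k₀ := by linarith
        refine ⟨hρ0.le.trans hle, ?_⟩
        calc |(1 : ℝ)| = 1 / ρ * ρ := by rw [abs_one]; field_simp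
          _ ≤ M * p' k₀ := by gcongr
      · rw [hck] at hpk ⊢
        have h4 : 0 ≤ p' k₀ := by linarith
        exact ⟨h4, by rw [abs_zero]; positivity⟩
  rw [hsum, abs_mul, abs_div, abs_of_nonneg key.1]
  exact mul_le_mul hℓ' (div_le_of_le_mul₀ key.1 hM0 key.2) (by have := key.1; positivity) hL
end

section
/- Let T ≥ 1 and let a_1, …, a_T be nonnegative reals. Then Σ_{t=1}^T a_t / √( 2·Σ_{s=1}^{t−1} a_s + 1 ) ≤ 2·√( Σ_{t=1}^T a_t + 1 ) + max_{t ∈ [T]} a_t. -/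
open Finset

/-!
Write `S_t = ∑ s < t, a s`, `u_t = √(2 S_t + 1)` and `M = max a`. Each summand splits as
`a_t / u_t = a_t / u_{t+1} + a_t (1 / u_t - 1 / u_{t+1})`. Since `2 a_t = u_{t+1}² - u_t²`, the
first part is at most `u_{t+1} - u_t`; since `a_t ≤ M`, the second is at most
`M (1 / u_t - 1 / u_{t+1})`. Both bounds telescope (`adaptive_step`, `adaptive_telescope`),
giving `u_T - 1 + M (1 - 1 / u_T) ≤ 2 √(S_T + 1) + M`.
-/

/-- One step of the telescoping, with `v`, `u` the consecutive square roots. -/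
lemma adaptive_step {x M u v : ℝ} (hv : 0 < v) (hvu : v ≤ u) (hx : 2 * x = u ^ 2 - v ^ 2)
    (hxM : x ≤ M) : x / v ≤ (u - v) + M * (1 / v - 1 / u) := by
  have hu : 0 < u := hv.trans_le hvu
  have h1 : x / u ≤ u - v := by
    rw [div_le_iff₀ hu]
    nlinarith [sq_nonneg (u - v)]
  have h2 : 0 ≤ 1 / v - 1 / u := sub_nonneg.mpr (one_div_le_one_div_of_le hv hvu)
  have h3 : x / v = x / u + x * (1 / v - 1 / u) := by ring
  rw [h3]
  exact add_le_add h1 (mul_le_mul_of_nonneg_right hxM h2)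

lemma adaptive_telescope (a : ℕ → ℝ) (M : ℝ) (T : ℕ) (ha : ∀ t < T, 0 ≤ a t)
    (hM : ∀ t < T, a t ≤ M) :
    ∑ t ∈ range T, a t / Real.sqrt (2 * (∑ s ∈ range t, a s) + 1)
      ≤ (Real.sqrt (2 * (∑ s ∈ range T, a s) + 1) - 1)
        + M * (1 - 1 / Real.sqrt (2 * (∑ s ∈ range T, a s) + 1)) := by
  induction T with
  | zero => simp
  | succ n ih =>
    have ih' := ih (fun t ht => ha t (by omega)) (fun t ht => hM t (by omega))
    have hS : 0 ≤ ∑ s ∈ range n, a s :=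
      sum_nonneg fun s hs => ha s (by have := mem_range.mp hs; omega)
    have hn : 0 ≤ a n := ha n (by omega)
    rw [sum_range_succ (fun t => a t / _), sum_range_succ a]
    have hstep := adaptive_step (x := a n) (M := M)
      (v := Real.sqrt (2 * (∑ s ∈ range n, a s) + 1))
      (u := Real.sqrt (2 * (∑ s ∈ range n, a s + a n) + 1))
      (Real.sqrt_pos.mpr (by linarith)) (Real.sqrt_le_sqrt (by linarith))
      (by rw [Real.sq_sqrt (by linarith), Real.sq_sqrt (by linarith)]; ring)
      (hM n (by omega))
    linarith

/-- Lemma 10 of the paper: `Σ_t a_t/√(2·Σ_{s<t} a_s + 1) ≤ 2√(Σ_t a_t + 1) + max_t a_t`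
for nonnegative reals. Indexing is 0-based over `t = 0, …, T-1`. -/
theorem adaptive_rate_sum_bound (T : ℕ) (hT : 1 ≤ T)
    (a : ℕ → ℝ) (ha : ∀ t < T, 0 ≤ a t) :
    ∑ t ∈ range T, a t / Real.sqrt (2 * (∑ s ∈ range t, a s) + 1)
      ≤ 2 * Real.sqrt ((∑ t ∈ range T, a t) + 1)
        + (range T).sup' (nonempty_range_iff.mpr (by omega)) a := by
  set M := (range T).sup' (nonempty_range_iff.mpr (by omega)) a
  have hM : ∀ t < T, a t ≤ M := fun t ht => le_sup' a (mem_range.mpr ht)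
  have hM0 : 0 ≤ M := (ha 0 (by omega)).trans (hM 0 (by omega))
  have hS : 0 ≤ ∑ s ∈ range T, a s := sum_nonneg fun s hs => ha s (mem_range.mp hs)
  have h := adaptive_telescope a M T ha hM
  have h1 : Real.sqrt (2 * (∑ s ∈ range T, a s) + 1)
      ≤ 2 * Real.sqrt ((∑ t ∈ range T, a t) + 1) := by
    rw [Real.sqrt_le_left (by positivity), mul_pow, Real.sq_sqrt (by linarith)]
    linarith
  have h2 : 0 ≤ M * (1 / Real.sqrt (2 * (∑ s ∈ range T, a s) + 1)) := by positivity
  linarith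
end

section
/- Let T ≥ 1 and let ℓ_1, …, ℓ_T ∈ ℝ. Define the clipping thresholds recursively by C_1 = −1 and, for t = 1, …, T, ℓ′_t = max(2·C_t, ℓ_t) and C_{t+1} = min(C_t, ℓ′_t). Then the number of rounds at which clipping occurs satisfies card{ t ∈ [T] : ℓ_t < 2·C_t } ≤ log₂( 1 + max_{t ∈ [T]} |ℓ_t| ). -/
open Finset

/-!
Each clipping doubles the threshold magnitude `-C`, which starts at `1` and never decreases, so
after `n` clippings `2 ^ n ≤ -C`. At a clipping round, the `n + 1`-st say, the loss satisfies
`ℓ < 2 * C ≤ -2 ^ (n + 1)`, so `2 ^ (n + 1) < |ℓ| ≤ max |ℓ|`. Hence the total count `n` always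
satisfies `2 ^ n ≤ 1 + max |ℓ|` (the summand `1` covers `n = 0`), and taking `logb 2` finishes.
-/

/-- After `t` rounds with `n` clippings, both the threshold magnitude and `1 + M` are at least
`2 ^ n`, for every nonnegative bound `M` on the losses of these rounds. -/
lemma two_pow_clippings_le (ℓ C : ℕ → ℝ) (hC0 : C 0 = -1)
    (hC : ∀ t, C (t + 1) = min (C t) (max (2 * C t) (ℓ t))) (M : ℝ) (hM0 : 0 ≤ M) (t : ℕ)
    (hM : ∀ s < t, |ℓ s| ≤ M) :
    (2 : ℝ) ^ ((range t).filter (fun s => ℓ s < 2 * C s)).card ≤ -C t ∧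
      (2 : ℝ) ^ ((range t).filter (fun s => ℓ s < 2 * C s)).card ≤ 1 + M := by
  induction t with
  | zero => simp [hC0, hM0]
  | succ t ih =>
    obtain ⟨ih₁, ih₂⟩ := ih fun s hs => hM s (by omega)
    have hpos : (0 : ℝ) < 2 ^ ((range t).filter (fun s => ℓ s < 2 * C s)).card := by positivity
    rw [range_add_one, filter_insert]
    split_ifs with h
    · rw [card_insert_of_notMem (by simp), pow_succ, hC, max_eq_left h.le,
        min_eq_right (by linarith)]
      have hℓ := hM t (by omega)
      have := neg_le_abs (ℓ t)
      constructor <;> linarith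
    · refine ⟨ih₁.trans ?_, ih₂⟩
      rw [hC]
      exact neg_le_neg (min_le_left _ _)

/-- Doubling-trick counting argument of Lemma 11 of the paper: with clipping
thresholds `C 0 = -1` and `C (t+1) = min (C t) (max (2·C t) (ℓ t))`, clipping
(`ℓ t < 2·C t`) occurs at most `log₂(1 + max_t |ℓ t|)` times.
Indexing is 0-based over `t = 0, …, T-1`. -/
theorem clipping_count_bound (T : ℕ) (hT : 1 ≤ T) (ℓ : ℕ → ℝ)
    (C : ℕ → ℝ) (hC0 : C 0 = -1)
    (hC : ∀ t, C (t + 1) = min (C t) (max (2 * C t) (ℓ t))) :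
    (((range T).filter (fun t => ℓ t < 2 * C t)).card : ℝ)
      ≤ Real.logb 2
          (1 + (range T).sup' (nonempty_range_iff.mpr (by omega))
            (fun t => |ℓ t|)) := by
  have hM : ∀ s < T, |ℓ s| ≤ (range T).sup' (nonempty_range_iff.mpr (by omega))
      (fun t => |ℓ t|) :=
    fun s hs => le_sup' (fun t => |ℓ t|) (mem_range.mpr hs)
  have hM0 := (abs_nonneg (ℓ 0)).trans (hM 0 hT)
  rw [Real.le_logb_iff_rpow_le one_lt_two (by linarith), Real.rpow_natCast]
  exact (two_pow_clippings_le ℓ C hC0 hC _ hM0 T hM).2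
end
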